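/- arXiv:2307.02904 — 2 statements merged into one kernel-verified Lean document; each statement's English description precedes it below -/
import Mathlib

section
/- Let b < d be real numbers, let 0 < ε < 1 and let p ≥ 2 be a real number. Then ω(T(b−ε, d+ε) Δ T(b,d)) = 2(d − b)·ε + 2ε² > 2(d − b + 1)·ε^p. In particular, the constant C(b,d) = 2(d − b + 1) cannot bound ω(T(b,d) Δ T(b',d')) by C(b,d) times the p-th power of the ℓ∞ distance max(|b − b'|, |d − d'|) for any exponent p ≥ 2, so no Lipschitz-type stability of the L^p norm of rank functions with respect to the bottleneck distance is possible for p ≥ 2. -/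
open MeasureTheory

/-- The triangular region `T(b,d) = {(x,y) : b ≤ x ≤ y ≤ d}` in the plane. -/
def Tri (b d : ℝ) : Set (ℝ × ℝ) := {q | b ≤ q.1 ∧ q.1 ≤ q.2 ∧ q.2 ≤ d}

lemma Tri_meas (b d : ℝ) : MeasurableSet (Tri b d) := by
  have h : IsClosed (Tri b d) := by
    unfold Tri
    exact (isClosed_le continuous_const continuous_fst).inter
      ((isClosed_le continuous_fst continuous_snd).inter
        (isClosed_le continuous_snd continuous_const))
  exact h.measurableSet

lemma Tri_vol (b d : ℝ) (h : b ≤ d) :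
    volume (Tri b d) = ENNReal.ofReal ((d - b) ^ 2 / 2) := by
  rw [Measure.volume_eq_prod, Measure.prod_apply (Tri_meas b d)]
  have h1 : ∀ x : ℝ, volume (Prod.mk x ⁻¹' Tri b d)
      = (Set.Icc b d).indicator (fun x => ENNReal.ofReal (d - x)) x := by
    intro x
    by_cases hx : x ∈ Set.Icc b d
    · rw [Set.indicator_of_mem hx, ← Real.volume_Icc]
      congr 1
      ext y
      simp only [Tri, Set.mem_preimage, Set.mem_setOf_eq, Set.mem_Icc]
      exact ⟨fun q => q.2, fun q => ⟨hx.1, q⟩⟩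
    · rw [Set.indicator_of_notMem hx]
      have : Prod.mk x ⁻¹' Tri b d = ∅ := by
        ext y
        simp only [Tri, Set.mem_preimage, Set.mem_setOf_eq, Set.mem_empty_iff_false, iff_false]
        exact fun q => hx ⟨q.1, q.2.1.trans q.2.2⟩
      rw [this, measure_empty]
  simp_rw [h1]
  rw [lintegral_indicator measurableSet_Icc, ← ofReal_integral_eq_lintegral_ofReal]
  · congr 1
    rw [integral_Icc_eq_integral_Ioc, ← intervalIntegral.integral_of_le h,
      intervalIntegral.integral_sub (by simp) (by simp)]
    simp
    ring
  · exact (by fun_prop : Continuous fun x : ℝ => d - x).integrableOn_Icc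
  · filter_upwards [ae_restrict_mem measurableSet_Icc] with x hx
    exact sub_nonneg.2 hx.2

/-- For `b < d`, `0 < ε < 1` and real `p ≥ 2`, the Lebesgue measure of the
symmetric difference of `T(b−ε, d+ε)` and `T(b,d)` equals `2(d − b)·ε + 2ε²`,
which is strictly greater than `2(d − b + 1)·ε^p`.  Hence the constant
`C(b,d) = 2(d − b + 1)` cannot bound the symmetric-difference area by the `p`-th
power of the `ℓ∞` matching distance: no Lipschitz-type stability for `p ≥ 2`. -/
theorem stmt_5 (b d ε p : ℝ) (hbd : b < d) (hε0 : 0 < ε) (hε1 : ε < 1) (hp : 2 ≤ p) :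
    volume (symmDiff (Tri (b - ε) (d + ε)) (Tri b d))
        = ENNReal.ofReal (2 * (d - b) * ε + 2 * ε ^ 2) ∧
    2 * (d - b) * ε + 2 * ε ^ 2 > 2 * (d - b + 1) * ε ^ p := by
  have hsub : Tri b d ⊆ Tri (b - ε) (d + ε) := by
    rintro q ⟨h1, h2, h3⟩
    exact ⟨by linarith, h2, by linarith⟩
  constructor
  · rw [Set.symmDiff_def, Set.diff_eq_empty.2 hsub, Set.union_empty,
      measure_diff hsub (Tri_meas b d).nullMeasurableSet
        (by rw [Tri_vol b d hbd.le]; exact ENNReal.ofReal_ne_top),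
      Tri_vol b d hbd.le, Tri_vol _ _ (by linarith), ← ENNReal.ofReal_sub _ (by positivity)]
    congr 1
    ring
  · have h1 : ε ^ p ≤ ε ^ 2 := by
      rw [← Real.rpow_two]
      exact Real.rpow_le_rpow_of_exponent_ge hε0 hε1.le hp
    have h2 : ε ^ 2 < ε := by nlinarith
    nlinarith [mul_pos (sub_pos.2 hbd) (sub_pos.2 (h1.trans_lt h2))]
end

section
/- Fix 1 ≤ p < ∞ and δ > 0. Let m ≥ 1 and n ≥ 0 be integers. Suppose given real numbers b_i ≤ d_i and b'_i ≤ d'_i for i = 1,…,m (matched pairs of bars), and real numbers c_j ≤ e_j with e_j − c_j ≤ δ for j = 1,…,n (bars matched to the diagonal). Set η := max over i of max(|b_i − b'_i|, |d_i − d'_i|) and R := max over i of (d_i − b_i), and assume η ≤ 1. Let S_δ := {(x,y) ∈ ℝ² : y > x + δ}, and define the δ-truncated rank functions f := Σ_{i=1}^m 1_{T(b_i,d_i) ∩ S_δ} and g := Σ_{i=1}^m 1_{T(b'_i,d'_i) ∩ S_δ} + Σ_{j=1}^n 1_{T(c_j,e_j) ∩ S_δ}. Then (∫_{ℝ²} |f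 − g|^p dω)^{1/p} ≤ m · (2R + 2)^{1/p} · η^{1/p}. -/
open MeasureTheory

/-- The open region `S_δ = {(x,y) : y > x + δ}` above the diagonal. -/
def Sdelta (δ : ℝ) : Set (ℝ × ℝ) := {q | q.1 + δ < q.2}

theorem tri_closed (b d : ℝ) : IsClosed (Tri b d) := by
  unfold Tri
  exact (isClosed_le continuous_const continuous_fst).inter
    ((isClosed_le continuous_fst continuous_snd).inter
      (isClosed_le continuous_snd continuous_const))

theorem tri_vol (b d : ℝ) :
    volume (Tri b d) = ENNReal.ofReal ((max 0 (d - b)) ^ 2 / 2) := by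
  rw [Measure.volume_eq_prod, Measure.prod_apply (tri_closed b d).measurableSet]
  have h1 : ∀ x : ℝ, volume (Prod.mk x ⁻¹' Tri b d)
      = (Set.Icc b d).indicator (fun x => ENNReal.ofReal (d - x)) x := by
    intro x
    by_cases hx : x ∈ Set.Icc b d
    · rw [Set.indicator_of_mem hx]
      have : Prod.mk x ⁻¹' Tri b d = Set.Icc x d := by
        ext y
        simp only [Tri, Set.mem_preimage, Set.mem_setOf_eq, Set.mem_Icc]
        exact ⟨fun h => h.2, fun h => ⟨hx.1, h⟩⟩
      rw [this, Real.volume_Icc]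
    · rw [Set.indicator_of_notMem hx]
      have : Prod.mk x ⁻¹' Tri b d = ∅ := by
        ext y
        simp only [Tri, Set.mem_preimage, Set.mem_setOf_eq, Set.mem_empty_iff_false, iff_false]
        exact fun h => hx ⟨h.1, h.2.1.trans h.2.2⟩
      rw [this, measure_empty]
  simp_rw [h1]
  rw [lintegral_indicator measurableSet_Icc]
  rcases le_total b d with h | h
  · rw [← ofReal_integral_eq_lintegral_ofReal]
    · rw [integral_Icc_eq_integral_Ioc, ← intervalIntegral.integral_of_le h]
      congr 1
      rw [intervalIntegral.integral_sub (by simp) (by simp)]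
      rw [max_eq_right (by linarith)]
      simp
      ring
    · exact (by fun_prop : Continuous fun x : ℝ => d - x).continuousOn.integrableOn_Icc
    · filter_upwards [ae_restrict_mem measurableSet_Icc] with x hx
      simpa using hx.2
  · rw [max_eq_left (by linarith)]
    have : volume (Set.Icc b d) = 0 := by
      rw [Real.volume_Icc]; simpa using h
    rw [Measure.restrict_eq_zero.mpr this]
    simp

theorem tri_inter (b d b' d' : ℝ) :
    Tri b d ∩ Tri b' d' = Tri (max b b') (min d d') := by
  ext q
  simp only [Tri, Set.mem_inter_iff, Set.mem_setOf_eq, max_le_iff, le_min_iff]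
  tauto

theorem tri_fin (b d : ℝ) : volume (Tri b d) ≠ ⊤ := by
  rw [tri_vol]; exact ENNReal.ofReal_ne_top

theorem tri_real (b d : ℝ) : volume.real (Tri b d) = (max 0 (d - b)) ^ 2 / 2 := by
  rw [Measure.real, tri_vol, ENNReal.toReal_ofReal (by positivity)]

theorem area_ineq (L s t η : ℝ) (hL : 0 ≤ L) (hL' : 0 ≤ L + s + t) (hs : |s| ≤ η)
    (ht : |t| ≤ η) (h1 : η ≤ 1) :
    L ^ 2 / 2 + (L + s + t) ^ 2 / 2 - (max 0 (L + min s 0 + min t 0)) ^ 2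
      ≤ (2 * L + 2) * η := by
  obtain ⟨hs1, hs2⟩ := abs_le.mp hs
  obtain ⟨ht1, ht2⟩ := abs_le.mp ht
  have h0 : 0 ≤ η := (abs_nonneg s).trans hs
  have hηη : η * η ≤ η := by nlinarith
  rcases le_total s 0 with a | a <;> rcases le_total t 0 with c | c
  · rw [min_eq_left a, min_eq_left c, max_eq_right hL']
    nlinarith
  · rw [min_eq_left a, min_eq_right c]
    rcases le_total 0 (L + s + 0) with k | k
    · rw [max_eq_right k]
      nlinarith [mul_nonneg k (sub_nonneg.2 ht2), mul_nonneg k (by linarith : 0 ≤ η + s)]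
    · rw [max_eq_left k]
      nlinarith
  · rw [min_eq_right a, min_eq_left c]
    rcases le_total 0 (L + 0 + t) with k | k
    · rw [max_eq_right k]
      nlinarith [mul_nonneg k (sub_nonneg.2 hs2), mul_nonneg k (by linarith : 0 ≤ η + t)]
    · rw [max_eq_left k]
      nlinarith
  · rw [min_eq_right a, min_eq_right c, max_eq_right (by linarith)]
    nlinarith [mul_nonneg hL (sub_nonneg.2 hs2), mul_nonneg hL (sub_nonneg.2 ht2)]

theorem symm_vol (b d b' d' η : ℝ) (hbd : b ≤ d) (hbd' : b' ≤ d') (hb : |b - b'| ≤ η)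
    (hd : |d - d'| ≤ η) (h1 : η ≤ 1) :
    volume (Tri b d \ Tri b' d' ∪ Tri b' d' \ Tri b d)
      ≤ ENNReal.ofReal ((2 * (d - b) + 2) * η) := by
  have e1 := measureReal_diff_add_inter (μ := volume) (s := Tri b d)
    (tri_closed b' d').measurableSet (tri_fin b d)
  have e2 := measureReal_diff_add_inter (μ := volume) (s := Tri b' d')
    (tri_closed b d).measurableSet (tri_fin b' d')
  rw [Set.inter_comm (Tri b' d')] at e2
  rw [tri_inter, tri_real, tri_real] at e1 e2
  have f1 : volume (Tri b d \ Tri b' d') ≠ ⊤ :=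
    measure_ne_top_of_subset Set.diff_subset (tri_fin b d)
  have f2 : volume (Tri b' d' \ Tri b d) ≠ ⊤ :=
    measure_ne_top_of_subset Set.diff_subset (tri_fin b' d')
  refine (measure_union_le _ _).trans ?_
  rw [← ENNReal.ofReal_toReal f1, ← ENNReal.ofReal_toReal f2,
    ← ENNReal.ofReal_add ENNReal.toReal_nonneg ENNReal.toReal_nonneg]
  apply ENNReal.ofReal_le_ofReal
  change volume.real _ + volume.real _ ≤ _
  have key := area_ineq (d - b) (b - b') (d' - d) η (by linarith) (by linarith) hb
    (by rwa [abs_sub_comm]) h1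
  have e3 : min d d' - max b b' = d - b + min (b - b') 0 + min (d' - d) 0 := by
    rcases le_total b b' with x | x <;> rcases le_total d d' with y | y <;>
      simp [x, y]
  rw [max_eq_right (by linarith : 0 ≤ d - b)] at e1
  rw [max_eq_right (by linarith : 0 ≤ d' - b')] at e2
  rw [e3] at e1 e2
  have e4 : d - b + (b - b') + (d' - d) = d' - b' := by ring
  rw [e4] at key
  linarith

theorem ind_diff (A B S : Set (ℝ × ℝ)) (x : ℝ × ℝ) :
    |(A ∩ S).indicator (fun _ => (1 : ℝ)) x - (B ∩ S).indicator (fun _ => (1 : ℝ)) x|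
      ≤ (A \ B ∪ B \ A).indicator (fun _ => (1 : ℝ)) x := by
  classical
  by_cases hA : x ∈ A <;> by_cases hB : x ∈ B <;> by_cases hS : x ∈ S <;>
    simp [hA, hB, hS]

/-- Bottleneck stability for δ-truncated rank functions: with `η ≤ 1` the
bottleneck matching cost and `R` the maximum persistence of the first barcode,
the `L^p` distance between the truncated rank functions is at most
`m · (2R + 2)^{1/p} · η^{1/p}`. -/
theorem stmt_6 (p δ : ℝ) (hp : 1 ≤ p) (hδ : 0 < δ)
    (m n : ℕ) (hm : 1 ≤ m)
    (b d b' d' : Fin m → ℝ) (c e : Fin n → ℝ)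
    (hbd : ∀ i, b i ≤ d i) (hbd' : ∀ i, b' i ≤ d' i)
    (hce : ∀ j, c j ≤ e j) (hdiag : ∀ j, e j - c j ≤ δ)
    (η R : ℝ)
    (hη : η = Finset.univ.sup' ⟨⟨0, hm⟩, Finset.mem_univ _⟩
      (fun i => max |b i - b' i| |d i - d' i|))
    (hR : R = Finset.univ.sup' ⟨⟨0, hm⟩, Finset.mem_univ _⟩ (fun i => d i - b i))
    (hη1 : η ≤ 1)
    (f g : ℝ × ℝ → ℝ)
    (hf : f = fun x => ∑ i, (Tri (b i) (d i) ∩ Sdelta δ).indicator (fun _ => (1 : ℝ)) x)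
    (hg : g = fun x =>
      (∑ i, (Tri (b' i) (d' i) ∩ Sdelta δ).indicator (fun _ => (1 : ℝ)) x)
        + ∑ j, (Tri (c j) (e j) ∩ Sdelta δ).indicator (fun _ => (1 : ℝ)) x) :
    (∫⁻ x, ENNReal.ofReal (|f x - g x| ^ p)) ^ (1 / p)
      ≤ ENNReal.ofReal ((m : ℝ) * (2 * R + 2) ^ (1 / p) * η ^ (1 / p)) := by
  have hp0 : 0 < p := by linarith
  have hηi : ∀ i, max |b i - b' i| |d i - d' i| ≤ η := fun i => by
    rw [hη]
    exact Finset.le_sup' (fun i => max |b i - b' i| |d i - d' i|) (Finset.mem_univ i)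
  have hRi : ∀ i, d i - b i ≤ R := fun i => by
    rw [hR]
    exact Finset.le_sup' (fun i => d i - b i) (Finset.mem_univ i)
  have hη0 : 0 ≤ η := (abs_nonneg _).trans ((le_max_left _ _).trans (hηi ⟨0, hm⟩))
  have hR0 : 0 ≤ R := by
    have h1 := hRi ⟨0, hm⟩
    have h2 := hbd ⟨0, hm⟩
    linarith
  have hm0 : (0 : ℝ) ≤ m := Nat.cast_nonneg m
  set E : Fin m → Set (ℝ × ℝ) := fun i =>
    Tri (b i) (d i) \ Tri (b' i) (d' i) ∪ Tri (b' i) (d' i) \ Tri (b i) (d i) with hE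
  have hEm : ∀ i, MeasurableSet (E i) := fun i =>
    ((tri_closed _ _).measurableSet.diff (tri_closed _ _).measurableSet).union
      ((tri_closed _ _).measurableSet.diff (tri_closed _ _).measurableSet)
  have hEv : ∀ i, volume (E i) ≤ ENNReal.ofReal ((2 * R + 2) * η) := fun i => by
    refine (symm_vol _ _ _ _ η (hbd i) (hbd' i) ((le_max_left _ _).trans (hηi i))
      ((le_max_right _ _).trans (hηi i)) hη1).trans (ENNReal.ofReal_le_ofReal ?_)
    have := hRi i
    gcongr
  have hzero : ∀ x, ∑ j, (Tri (c j) (e j) ∩ Sdelta δ).indicator (fun _ => (1 : ℝ)) x = 0 := by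
    intro x
    refine Finset.sum_eq_zero fun j _ => Set.indicator_of_notMem ?_ _
    rintro ⟨⟨h1, h2, h3⟩, h4⟩
    have h5 := hdiag j
    simp only [Sdelta, Set.mem_setOf_eq] at h4
    linarith
  have hpt : ∀ x, |f x - g x| ^ p
      ≤ (m : ℝ) ^ (p - 1) * ∑ i, (E i).indicator (fun _ => (1 : ℝ)) x := by
    intro x
    have hN : |f x - g x| ≤ ∑ i, (E i).indicator (fun _ => (1 : ℝ)) x := by
      rw [hf, hg]
      simp only [hzero, add_zero]
      rw [← Finset.sum_sub_distrib]
      exact (Finset.abs_sum_le_sum_abs _ _).trans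
        (Finset.sum_le_sum fun i _ => ind_diff _ _ _ x)
    have hNm : ∑ i, (E i).indicator (fun _ => (1 : ℝ)) x ≤ m := by
      calc ∑ i, (E i).indicator (fun _ => (1 : ℝ)) x ≤ ∑ i : Fin m, (1 : ℝ) :=
            Finset.sum_le_sum fun i _ =>
              Set.indicator_le_self' (fun _ _ => zero_le_one) x
        _ = m := by simp
    have hsplit : |f x - g x| ^ p = |f x - g x| ^ (p - 1) * |f x - g x| := by
      rcases (abs_nonneg (f x - g x)).eq_or_lt with h | h
      · rw [← h, Real.zero_rpow hp0.ne', mul_zero]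
      · rw [Real.rpow_sub_one h.ne']
        field_simp
    rw [hsplit]
    have : |f x - g x| ^ (p - 1) ≤ (m : ℝ) ^ (p - 1) :=
      Real.rpow_le_rpow (abs_nonneg _) (hN.trans hNm) (by linarith)
    exact mul_le_mul this hN (abs_nonneg _) (by positivity)
  have hint : ∫⁻ x, ENNReal.ofReal (|f x - g x| ^ p)
      ≤ ENNReal.ofReal ((m : ℝ) ^ p * ((2 * R + 2) * η)) := by
    calc ∫⁻ x, ENNReal.ofReal (|f x - g x| ^ p)
        ≤ ∫⁻ x, ENNReal.ofReal ((m : ℝ) ^ (p - 1)) *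
            ∑ i, (E i).indicator (fun _ => (1 : ENNReal)) x := by
          refine lintegral_mono fun x => (ENNReal.ofReal_le_ofReal (hpt x)).trans ?_
          rw [ENNReal.ofReal_mul (by positivity), ENNReal.ofReal_sum_of_nonneg
            (fun i _ => Set.indicator_nonneg (fun _ _ => zero_le_one) x)]
          refine le_of_eq ?_
          congr 1
          refine Finset.sum_congr rfl fun i _ => ?_
          by_cases hx : x ∈ E i
          · rw [Set.indicator_of_mem hx, Set.indicator_of_mem hx, ENNReal.ofReal_one]
          · rw [Set.indicator_of_notMem hx, Set.indicator_of_notMem hx, ENNReal.ofReal_zero]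
      _ = ENNReal.ofReal ((m : ℝ) ^ (p - 1)) * ∑ i, volume (E i) := by
          rw [lintegral_const_mul' _ _ ENNReal.ofReal_ne_top, lintegral_finsetSum]
          · congr 1
            refine Finset.sum_congr rfl fun i _ => ?_
            rw [lintegral_indicator_const (hEm i), one_mul]
          · exact fun i _ => measurable_const.indicator (hEm i)
      _ ≤ ENNReal.ofReal ((m : ℝ) ^ (p - 1)) *
            ∑ i : Fin m, ENNReal.ofReal ((2 * R + 2) * η) := by
          gcongr with i
          exact hEv i
      _ = ENNReal.ofReal ((m : ℝ) ^ p * ((2 * R + 2) * η)) := by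
          have hmp : (0 : ℝ) < m := by exact_mod_cast hm
          rw [Finset.sum_const, Finset.card_univ, Fintype.card_fin, nsmul_eq_mul,
            ← ENNReal.ofReal_natCast m, ← ENNReal.ofReal_mul hm0,
            ← ENNReal.ofReal_mul (by positivity), Real.rpow_sub_one hmp.ne']
          congr 1
          field_simp
  refine (ENNReal.rpow_le_rpow hint (by positivity)).trans ?_
  rw [ENNReal.ofReal_rpow_of_nonneg (by positivity) (by positivity)]
  refine ENNReal.ofReal_le_ofReal (le_of_eq ?_)
  rw [Real.mul_rpow (by positivity) (by positivity), Real.mul_rpow (by positivity) hη0,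
    ← Real.rpow_mul hm0, mul_one_div_cancel hp0.ne', Real.rpow_one, mul_assoc]
end
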